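/- Let I ⊆ R = K[x₁,…,xₙ] be a monomial ideal. If I^m is integrally closed for every m with 1 ≤ m ≤ n−1, then I is normal, i.e., I^m is integrally closed for all m ≥ 1. -/

import Mathlib

open Finset

/-- `x` is integral over the ideal `I`: it satisfies an equation
`x^m + a₁ x^{m-1} + ⋯ + a_m = 0` with `a_k ∈ I^k`. -/
def IsIntegralOverIdeal {A : Type*} [CommRing A] (I : Ideal A) (x : A) : Prop :=
  ∃ m : ℕ, 0 < m ∧ ∃ a : ℕ → A,
    (∀ k ∈ Finset.Icc 1 m, a k ∈ I ^ k) ∧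
    x ^ m + ∑ k ∈ Finset.Icc 1 m, a k * x ^ (m - k) = 0

/-- An ideal is integrally closed if it contains every element integral over it. -/
def IsIntegrallyClosedIdeal {A : Type*} [CommRing A] (I : Ideal A) : Prop :=
  ∀ x : A, IsIntegralOverIdeal I x → x ∈ I

/-- An ideal is normal if all its positive powers are integrally closed. -/
def IsNormalIdeal {A : Type*} [CommRing A] (I : Ideal A) : Prop :=
  ∀ m : ℕ, 0 < m → IsIntegrallyClosedIdeal (I ^ m)

/-!
Write `I = (x^s : s ∈ S)`. An exponent `a` satisfies `x^a ∈ closure (I^r)` iff `a` dominates a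
nonnegative rational combination of elements of `S` of total weight at least `r`, that is, iff `a`
lies in the `r`-th dilate of the Newton polyhedron. By linear programming the combination can be
supported on linearly independent exponents, hence on at most `n` of them, without lowering the
weight. If the weight is at least `r + 1 ≥ n`, some `s ∈ S` then has coefficient at least `1`, and
`a - s` lies in the `r`-th dilate. So `x^(a-s) ∈ closure (I^r)`, and from `closure (I^r) = I^r` one
gets `x^a ∈ I^(r+1)`: from `r = n - 1` on, integral closedness propagates to all powers.
-/

section BasicSolutions

open Function

variable {𝕜 V ι : Type*} [Field 𝕜] [LinearOrder 𝕜] [IsStrictOrderedRing 𝕜]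
  [AddCommGroup V] [Module 𝕜 V]

lemma exists_linear_relation_sum_nonneg [Fintype ι] {v : ι → V} {s : Set ι}
    (φ : V →ₗ[𝕜] 𝕜) (hφ : ∀ i, 0 < φ (v i)) (w : ι → 𝕜) (hdep : ¬ LinearIndepOn 𝕜 v s) :
    ∃ c : ι → 𝕜, support c ⊆ s ∧ ∑ i, c i • v i = 0 ∧
      0 ≤ ∑ i, c i * w i ∧ ∃ i, c i < 0 := by
  obtain ⟨c, hcs, hcv, hc0, hcw⟩ : ∃ c : ι → 𝕜, support c ⊆ s ∧
      ∑ i, c i • v i = 0 ∧ c ≠ 0 ∧ 0 ≤ ∑ i, c i * w i := by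
    simp only [linearIndepOn_iff, not_forall] at hdep
    obtain ⟨c, hcs, hcv, hc0⟩ := hdep
    rw [Finsupp.linearCombination_apply, Finsupp.sum_fintype _ _ (by simp)] at hcv
    rw [Finsupp.mem_supported, ← Finsupp.fun_support_eq] at hcs
    rcases le_total 0 (∑ i, c i * w i) with hw | hw
    · exact ⟨c, hcs, hcv, by simpa using hc0, hw⟩
    · exact ⟨-c, by simpa using hcs, by simp [hcv], by simpa using hc0, by simpa using hw⟩
  refine ⟨c, hcs, hcv, hcw, ?_⟩
  by_contra! hc
  have hφc : ∑ i, c i * φ (v i) = 0 := by simpa using congrArg φ hcv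
  rw [Finset.sum_eq_zero_iff_of_nonneg fun i _ => mul_nonneg (hc i) (hφ i).le] at hφc
  exact hc0 (funext fun i => (mul_eq_zero.1 (hφc i (mem_univ i))).resolve_right (hφ i).ne')

lemma exists_support_add_smul_ssubset [Finite ι] {l c : ι → 𝕜} (hl : 0 ≤ l)
    (hcl : support c ⊆ support l) (hc : ∃ i, c i < 0) :
    ∃ t : 𝕜, 0 ≤ t ∧ 0 ≤ l + t • c ∧ support (l + t • c) ⊂ support l := by
  obtain ⟨j, hj, hmin⟩ :=
    Set.exists_min_image {i | c i < 0} (fun i => l i / -c i) (Set.toFinite _) hc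
  simp only [Set.mem_ofPred_eq] at hj hmin
  have ht : 0 ≤ l j / -c j := div_nonneg (hl j) (by linarith)
  refine ⟨l j / -c j, ht, fun i => ?_, ?_, fun hsub => ?_⟩
  · rcases lt_or_ge (c i) 0 with hi | hi
    · have := (le_div_iff₀ (neg_pos.2 hi)).1 (hmin i hi)
      simp only [Pi.zero_apply, Pi.add_apply, Pi.smul_apply, smul_eq_mul]
      linarith
    · exact add_nonneg (hl i) (mul_nonneg ht hi)
  · refine (support_add _ _).trans (Set.union_subset subset_rfl ?_)
    exact (support_const_smul_subset _ _).trans hcl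
  · refine hsub (hcl hj.ne) ?_
    have := hj.ne
    simp only [Pi.add_apply, Pi.smul_apply, smul_eq_mul]
    field_simp
    ring

lemma exists_linearIndepOn_support_of_nonneg [Fintype ι] {v : ι → V} (φ : V →ₗ[𝕜] 𝕜)
    (hφ : ∀ i, 0 < φ (v i)) (w : ι → 𝕜) {l : ι → 𝕜} (hl : 0 ≤ l) :
    ∃ l' : ι → 𝕜, 0 ≤ l' ∧ LinearIndepOn 𝕜 v (support l') ∧
      ∑ i, l' i • v i = ∑ i, l i • v i ∧ ∑ i, l i * w i ≤ ∑ i, l' i * w i := by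
  induction hs : support l using WellFoundedLT.induction generalizing l with
  | ind s ih =>
    subst hs
    by_cases hindep : LinearIndepOn 𝕜 v (support l)
    · exact ⟨l, hl, hindep, rfl, le_rfl⟩
    obtain ⟨c, hcl, hcv, hcw, hc⟩ := exists_linear_relation_sum_nonneg φ hφ w hindep
    obtain ⟨t, ht, hlt, hsupp⟩ := exists_support_add_smul_ssubset hl hcl hc
    obtain ⟨l', hl', hindep', hv, hw⟩ := ih _ hsupp hlt rfl
    refine ⟨l', hl', hindep', ?_, le_trans ?_ hw⟩
    · simp [hv, add_smul, mul_smul, sum_add_distrib, ← smul_sum, hcv]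
    · simpa [add_mul, mul_assoc, sum_add_distrib, ← mul_sum] using mul_nonneg ht hcw

end BasicSolutions

open Function in
lemma exists_one_le_of_ncard_support_le_sum {𝕜 ι : Type*} [Semiring 𝕜] [LinearOrder 𝕜]
    [IsStrictOrderedRing 𝕜] [Fintype ι] {l : ι → 𝕜} (hpos : 0 < ∑ j, l j)
    (hsum : ((support l).ncard : 𝕜) ≤ ∑ j, l j) : ∃ j, 1 ≤ l j := by
  classical
  have hsupp : support l = ({j | l j ≠ 0} : Finset ι) := by ext; simp
  rw [hsupp, Set.ncard_coe_finset, ← sum_filter_ne_zero] at hsum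
  rw [← sum_filter_ne_zero] at hpos
  obtain ⟨j, -, hj⟩ := exists_le_of_sum_le (f := fun _ => (1 : 𝕜))
    (nonempty_of_sum_ne_zero hpos.ne') (by simpa using hsum)
  exact ⟨j, hj⟩

section IntegralOverIdeal

lemma isIntegral_of_pow_add_sum_eq_zero {A B : Type*} [CommRing A] [Ring B] [Algebra A B]
    {y : B} {m : ℕ} (b : ℕ → A)
    (h : y ^ m + ∑ k ∈ Icc 1 m, algebraMap A B (b k) * y ^ (m - k) = 0) : IsIntegral A y := by
  nontriviality A
  open Polynomial in
  refine ⟨X ^ m + ∑ k ∈ Icc 1 m, C (b k) * X ^ (m - k), monic_X_pow_add ?_, ?_⟩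
  · refine (degree_sum_le _ _).trans_lt ?_
    refine (Finset.sup_lt_iff (WithBot.bot_lt_coe m)).2 fun k hk => ?_
    refine (degree_C_mul_X_pow_le _ _).trans_lt ?_
    have := mem_Icc.1 hk
    exact WithBot.coe_lt_coe.2 (by omega : m - k < m)
  · simpa [Polynomial.eval₂_finsetSum] using h

variable {A B : Type*} [CommRing A] [CommRing B] {I : Ideal A} {x : A}

lemma IsIntegralOverIdeal.of_pow_mem {k : ℕ} (hk : 0 < k) (hx : x ^ k ∈ I ^ k) :
    IsIntegralOverIdeal I x := by
  refine ⟨k, hk, fun j => if j = k then -x ^ k else 0, fun j _ => ?_, ?_⟩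
  · dsimp only
    split_ifs with hj
    · subst hj; exact neg_mem hx
    · exact zero_mem _
  · simp [ite_mul, Nat.one_le_iff_ne_zero, hk.ne']

lemma IsIntegralOverIdeal.map {J : Ideal B} (φ : A →+* B) (hIJ : I.map φ ≤ J)
    (hx : IsIntegralOverIdeal I x) : IsIntegralOverIdeal J (φ x) := by
  obtain ⟨m, hm, a, ha, hxa⟩ := hx
  refine ⟨m, hm, fun k => φ (a k), fun k hk => ?_, by simpa using congrArg φ hxa⟩
  have := Ideal.mem_map_of_mem φ (ha k hk)
  rw [Ideal.map_pow] at this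
  exact Ideal.pow_right_mono hIJ k this

lemma IsIntegralOverIdeal.isIntegral_map_mul {C : Type*} [CommRing C] [Algebra C B]
    (ψ : A →+* B) (t : B) (ht : ∀ k, ∀ b ∈ I ^ k, ψ b * t ^ k ∈ (algebraMap C B).range)
    (hx : IsIntegralOverIdeal I x) : IsIntegral C (ψ x * t) := by
  obtain ⟨m, -, a, ha, hxa⟩ := hx
  choose! b hb using fun k hk => ht k (a k) (ha k hk)
  refine isIntegral_of_pow_add_sum_eq_zero b (m := m) ?_
  calc (ψ x * t) ^ m + ∑ k ∈ Icc 1 m, algebraMap C B (b k) * (ψ x * t) ^ (m - k)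
      = ψ (x ^ m + ∑ k ∈ Icc 1 m, a k * x ^ (m - k)) * t ^ m := by
        simp only [map_add, map_sum, map_mul, map_pow, add_mul, sum_mul, mul_pow]
        congr 1
        refine sum_congr rfl fun k hk => ?_
        rw [hb k hk, ← pow_mul_pow_sub t (mem_Icc.1 hk).2]
        ring
    _ = 0 := by rw [hxa, map_zero, zero_mul]

lemma IsIntegralOverIdeal.of_isIntegral_reesAlgebra
    (hx : IsIntegral (reesAlgebra I) (Polynomial.monomial 1 x)) : IsIntegralOverIdeal I x := by
  cases subsingleton_or_nontrivial A
  · exact .of_pow_mem one_pos (Subsingleton.elim (x ^ 1) 0 ▸ zero_mem _)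
  obtain ⟨p, hp, hpx⟩ := hx
  have hm : 0 < p.natDegree := by
    refine Nat.pos_of_ne_zero fun h0 => ?_
    simp [hp.natDegree_eq_zero.1 h0] at hpx
  refine ⟨p.natDegree, hm,
    fun k => (p.coeff (p.natDegree - k) : Polynomial A).coeff k, fun k _ => (p.coeff _).2 k, ?_⟩
  have htop : ∑ i ∈ range (p.natDegree + 1),
      (p.coeff i : Polynomial A).coeff (p.natDegree - i) * x ^ i = 0 := by
    rw [← Polynomial.coeff_zero p.natDegree, ← hpx, Polynomial.eval₂_eq_sum_range,
      Polynomial.finsetSum_coeff]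
    refine sum_congr rfl fun i hi => ?_
    obtain ⟨j, hj⟩ := Nat.exists_eq_add_of_le' (Nat.le_of_lt_succ (mem_range.1 hi))
    rw [Polynomial.monomial_pow, one_mul, hj, Nat.add_sub_cancel, Polynomial.coeff_mul_monomial]
    rfl
  have hreflect : ∑ k ∈ Icc 1 p.natDegree,
        (p.coeff (p.natDegree - k) : Polynomial A).coeff k * x ^ (p.natDegree - k) =
      ∑ i ∈ range p.natDegree, (p.coeff i : Polynomial A).coeff (p.natDegree - i) * x ^ i := by
    refine sum_nbij' (p.natDegree - ·) (p.natDegree - ·) ?_ ?_ ?_ ?_ ?_ <;>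
      simp only [mem_Icc, mem_range] <;> intro k hk
    · omega
    · omega
    · omega
    · omega
    · rw [Nat.sub_sub_self hk.2]
  rw [hreflect, add_comm, ← htop, sum_range_succ]
  simp [hp]

open MvPolynomial

lemma IsIntegralOverIdeal.coeff {σ : Type*} {F : MvPolynomial σ A}
    (hF : IsIntegralOverIdeal (I.map (C : A →+* MvPolynomial σ A)) F) (d : σ →₀ ℕ) :
    IsIntegralOverIdeal I (F.coeff d) := by
  have hcoeff (G : MvPolynomial σ A) (k : ℕ) (e : σ →₀ ℕ) :
      MvPolynomial.coeff e (MvPolynomial.map Polynomial.C G * C Polynomial.X ^ k) =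
        Polynomial.monomial k (G.coeff e) := by
    rw [← map_pow, mul_comm, coeff_C_mul, coeff_map, mul_comm, Polynomial.C_mul_X_pow_eq_monomial]
  -- With `T` the Rees variable, `F T` is integral over `(reesAlgebra I)[x]`, and integrality over a
  -- polynomial ring can be tested coefficientwise.
  let := MvPolynomial.algebraMvPolynomial (R := reesAlgebra I) (S := Polynomial A) (σ := σ)
  have hint : IsIntegral (MvPolynomial σ (reesAlgebra I))
      (MvPolynomial.map Polynomial.C F * C (Polynomial.X : Polynomial A)) := by
    refine hF.isIntegral_map_mul _ _ fun k G hG => ?_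
    rw [MvPolynomial.algebraMap_def, RingHom.mem_range, ← Set.mem_range,
      mem_range_map_iff_coeffs_subset]
    intro z hz
    obtain ⟨e, -, rfl⟩ := mem_coeffs_iff.1 hz
    rw [← Ideal.map_pow, mem_map_C_iff] at hG
    rw [hcoeff]
    exact ⟨⟨_, reesAlgebra.monomial_mem.2 (hG e)⟩, rfl⟩
  have := isIntegral_iff_isIntegral_coeff.1 hint d
  rw [← pow_one (C _), hcoeff] at this
  exact .of_isIntegral_reesAlgebra this

end IntegralOverIdeal

section MonomialIdeal

open MvPolynomial
open scoped Pointwise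

variable {σ R : Type*} {S : Set (σ →₀ ℕ)} {a : σ →₀ ℕ}

section CommSemiring

variable [CommSemiring R]

/-- The monomial ideal of `R[x_i : i ∈ σ]` generated by the monomials `x^s` with `s ∈ S`. -/
noncomputable def monomialIdeal (R : Type*) [CommSemiring R] (S : Set (σ →₀ ℕ)) :
    Ideal (MvPolynomial σ R) :=
  Ideal.span ((fun s => monomial s (1 : R)) '' S)

lemma monomialIdeal_pow (S : Set (σ →₀ ℕ)) (k : ℕ) :
    monomialIdeal R S ^ k = monomialIdeal R (k • S) := by
  induction k with
  | zero => simp [monomialIdeal, Ideal.one_eq_top]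
  | succ k ih =>
    rw [pow_succ, ih, monomialIdeal, monomialIdeal, monomialIdeal, Ideal.span_mul_span', succ_nsmul,
      ← Set.image2_mul, ← Set.image2_add, Set.image2_image_left, Set.image2_image_right,
      Set.image_image2]
    simp only [monomial_mul, one_mul]

lemma mem_monomialIdeal_pow {f : MvPolynomial σ R} {k : ℕ} :
    f ∈ monomialIdeal R S ^ k ↔ ∀ a ∈ f.support, ∃ s ∈ k • S, s ≤ a := by
  rw [monomialIdeal_pow, monomialIdeal, mem_ideal_span_monomial_image]

/-- The `R`-algebra map `x_i ↦ x_i y_i` from `R[x]` to `R[x][y]`. It records the `ℕ^σ`-grading of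
`R[x]`: the coefficient of `y^a` in the image of `f` is the degree `a` component of `f`. -/
noncomputable def monomialGrading (σ R : Type*) [CommSemiring R] :
    MvPolynomial σ R →+* MvPolynomial σ (MvPolynomial σ R) :=
  eval₂Hom (C.comp C) fun i => C (X i) * X i

lemma monomialGrading_monomial (a : σ →₀ ℕ) (c : R) :
    monomialGrading σ R (monomial a c) = monomial a (monomial a c) := by
  rw [monomialGrading, coe_eval₂Hom, eval₂_monomial, monomial_eq (a := monomial a c),
    monomial_eq (a := c)]
  simp only [Finsupp.prod, mul_pow, prod_mul_distrib, map_mul, map_prod, map_pow,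
    RingHom.comp_apply, mul_assoc]

lemma coeff_monomialGrading (f : MvPolynomial σ R) (a : σ →₀ ℕ) :
    (monomialGrading σ R f).coeff a = monomial a (f.coeff a) := by
  classical
  induction f using MvPolynomial.induction_on' with
  | monomial b c =>
    rw [monomialGrading_monomial, coeff_monomial, coeff_monomial]
    split_ifs with h
    · rw [h]
    · rw [map_zero]
  | add p q hp hq => simp only [map_add, coeff_add, hp, hq]

lemma map_monomialGrading_monomialIdeal_le :
    (monomialIdeal R S).map (monomialGrading σ R) ≤
      (monomialIdeal R S).map (C : _ →+* MvPolynomial σ (MvPolynomial σ R)) := by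
  rw [monomialIdeal, Ideal.map_span, Ideal.span_le]
  rintro _ ⟨_, ⟨s, hs, rfl⟩, rfl⟩
  rw [SetLike.mem_coe, monomialGrading_monomial, ← mul_one (monomial s 1), ← C_mul_monomial]
  exact Ideal.mul_mem_right _ _ (Ideal.mem_map_of_mem C (Ideal.subset_span ⟨s, hs, rfl⟩))

end CommSemiring

variable [CommRing R] {f : MvPolynomial σ R}

lemma IsIntegralOverIdeal.monomial_coeff (hf : IsIntegralOverIdeal (monomialIdeal R S) f)
    (a : σ →₀ ℕ) : IsIntegralOverIdeal (monomialIdeal R S) (monomial a (f.coeff a)) := by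
  rw [← coeff_monomialGrading]
  exact (hf.map (monomialGrading σ R) map_monomialGrading_monomialIdeal_le).coeff a

lemma exists_nsmul_le_of_isIntegralOverIdeal_monomial [IsReduced R] {c : R} (hc : c ≠ 0)
    (h : IsIntegralOverIdeal (monomialIdeal R S) (monomial a c)) :
    ∃ k, 0 < k ∧ ∃ s ∈ k • S, s ≤ k • a := by
  obtain ⟨m, hm, b, hb, hab⟩ := h
  by_contra! hcon
  have hterm : ∀ k ∈ Icc 1 m,
      (b k * monomial a c ^ (m - k)).coeff (m • a) = 0 := by
    intro k hk
    obtain ⟨hk1, hkm⟩ := mem_Icc.1 hk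
    have hbk : (b k).coeff (k • a) = 0 := by
      by_contra hne
      obtain ⟨s, hs, hsa⟩ := mem_monomialIdeal_pow.1 (hb k hk) _ (mem_support_iff.2 hne)
      exact hcon k hk1 s hs hsa
    rw [monomial_pow, ← Nat.add_sub_of_le hkm, add_smul, Nat.add_sub_cancel_left,
      coeff_mul_monomial, hbk, zero_mul]
  have hlead := congrArg (MvPolynomial.coeff (m • a)) hab
  classical
  rw [coeff_add, coeff_sum, sum_eq_zero hterm, monomial_pow, coeff_monomial, if_pos rfl, add_zero,
    coeff_zero] at hlead
  exact hc (pow_eq_zero_iff hm.ne' |>.1 hlead)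

lemma exists_mem_nsmul_le_of_le {M : Type*} [AddCommMonoid M] [PartialOrder M]
    [CanonicallyOrderedAdd M] {T : Set M} {p q : ℕ} {t : M} (hpq : p ≤ q) (ht : t ∈ q • T) :
    ∃ s ∈ p • T, s ≤ t := by
  obtain ⟨d, rfl⟩ := Nat.exists_eq_add_of_le hpq
  rw [add_nsmul] at ht
  obtain ⟨s, hs, u, -, rfl⟩ := Set.mem_add.1 ht
  exact ⟨s, hs, le_self_add⟩

/-- The lattice points of the `r`-th dilate `r • conv S + ℝ_{≥0}^σ` of the Newton polyhedron of
`S`, used to describe the integral closure of `monomialIdeal R S ^ r`. Weights are rational, their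
sum may exceed `r`, and the points `v j` may repeat. For `r = 0` every exponent belongs to it. -/
def newtonDilate (S : Set (σ →₀ ℕ)) (r : ℕ) : Set (σ →₀ ℕ) :=
  {a | ∃ (N : ℕ) (v : Fin N → σ →₀ ℕ) (l : Fin N → ℚ), (∀ j, v j ∈ S) ∧ 0 ≤ l ∧
    (r : ℚ) ≤ ∑ j, l j ∧ ∀ i, ∑ j, l j * (v j i : ℚ) ≤ a i}

lemma mem_newtonDilate_of_nsmul_le {r k : ℕ} {s : σ →₀ ℕ} (hk : 0 < k)
    (hs : s ∈ (r * k) • S) (hsa : s ≤ k • a) : a ∈ newtonDilate S r := by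
  obtain ⟨v, rfl⟩ := Set.mem_nsmul.1 hs
  have hk' : (0 : ℚ) < k := Nat.cast_pos.2 hk
  refine ⟨r * k, fun j => v j, fun _ => (k : ℚ)⁻¹, fun j => (v j).2, fun _ => by positivity, ?_,
    fun i => ?_⟩
  · simp [hk'.ne']
  · have hi : ∑ j, (v j : σ →₀ ℕ) i ≤ k * a i := by
      simpa [List.sum_ofFn, Finsupp.finsetSum_apply] using hsa i
    rw [← mul_sum, inv_mul_le_iff₀ hk']
    exact_mod_cast hi

lemma exists_pos_natCast_mul_eq_natCast {ι : Type*} [Finite ι] {l : ι → ℚ} (hl : 0 ≤ l) :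
    ∃ D : ℕ, 0 < D ∧ ∃ w : ι → ℕ, ∀ j, (w j : ℚ) = D * l j := by
  cases nonempty_fintype ι
  refine ⟨∏ j, (l j).den, prod_pos fun j _ => (l j).den_pos, ?_⟩
  choose q hq using fun j => dvd_prod_of_mem (fun j => (l j).den) (mem_univ j)
  refine ⟨fun j => q j * (l j).num.toNat, fun j => ?_⟩
  have hnum : (((l j).num.toNat : ℤ) : ℚ) = (l j).num := by
    rw [Int.toNat_of_nonneg (Rat.num_nonneg.2 (hl j))]
  rw [hq j]
  push_cast at hnum ⊢
  rw [hnum, ← Rat.den_mul_eq_num]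
  ring

lemma exists_nsmul_le_of_mem_newtonDilate {r : ℕ} (ha : a ∈ newtonDilate S r) :
    ∃ k, 0 < k ∧ ∃ s ∈ (r * k) • S, s ≤ k • a := by
  obtain ⟨N, v, l, hv, hl, hr, ha⟩ := ha
  obtain ⟨D, hD, w, hw⟩ := exists_pos_natCast_mul_eq_natCast hl
  have hsum : r * D ≤ ∑ j, w j := by
    suffices ((r * D : ℕ) : ℚ) ≤ (∑ j, w j : ℕ) by exact_mod_cast this
    push_cast
    rw [sum_congr rfl fun j _ => hw j, ← mul_sum, mul_comm]
    gcongr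
  have hle : ∑ j, w j • v j ≤ D • a := by
    intro i
    suffices ((∑ j, w j * v j i : ℕ) : ℚ) ≤ (D * a i : ℕ) by
      simpa [Finsupp.finsetSum_apply] using Nat.cast_le.1 this
    push_cast
    simp only [hw, mul_assoc, ← mul_sum]
    gcongr
    exact ha i
  have hmem : ∑ j, w j • v j ∈ (∑ j, w j) • S := by
    rw [← Finset.sum_nsmul_assoc]
    exact Set.finsetSum_mem_finsetSum _ _ _ fun j _ => Set.nsmul_mem_nsmul (hv j)
  obtain ⟨s, hs, hsle⟩ := exists_mem_nsmul_le_of_le hsum hmem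
  exact ⟨D, hD, s, hs, hsle.trans hle⟩

/-- The rank of the set of exponents `S`, i.e. the dimension of its linear span in `ℚ^σ`. It
replaces the number of variables as the bound on the powers to be checked. -/
noncomputable def exponentRank (S : Set (σ →₀ ℕ)) : ℕ :=
  Set.finrank ℚ ((fun (s : σ →₀ ℕ) (i : σ) => (s i : ℚ)) '' S)

lemma exponentRank_le_card [Fintype σ] (S : Set (σ →₀ ℕ)) : exponentRank S ≤ Fintype.card σ :=
  (Submodule.finrank_le _).trans_eq (Module.finrank_fintype_fun_eq_card ℚ)

lemma ncard_le_exponentRank [Finite σ] {ι : Type*} {v : ι → σ →₀ ℕ} (hv : ∀ j, v j ∈ S)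
    {t : Set ι} (ht : LinearIndepOn ℚ (fun j i => (v j i : ℚ)) t) :
    t.ncard ≤ exponentRank S := by
  have := ht.finite
  cases nonempty_fintype t
  rw [← Nat.card_coe_set_eq, Nat.card_eq_fintype_card, ← finrank_span_eq_card ht]
  refine Submodule.finrank_mono (Submodule.span_mono ?_)
  rintro _ ⟨j, rfl⟩
  exact ⟨v j, hv j, rfl⟩

lemma exists_linearIndepOn_weights [Finite σ] {ι : Type*} [Fintype ι] {v : ι → σ →₀ ℕ}
    (hv : ∀ j, v j ≠ 0) {l : ι → ℚ} (hl : 0 ≤ l) :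
    ∃ l' : ι → ℚ, 0 ≤ l' ∧
      LinearIndepOn ℚ (fun j i => (v j i : ℚ)) (Function.support l') ∧
      (∀ i, ∑ j, l' j * (v j i : ℚ) = ∑ j, l j * (v j i : ℚ)) ∧ ∑ j, l j ≤ ∑ j, l' j := by
  cases nonempty_fintype σ
  let φ : (σ → ℚ) →ₗ[ℚ] ℚ := ∑ i, LinearMap.proj i
  have hφ (j) : 0 < φ fun i => (v j i : ℚ) := by
    obtain ⟨i, hi⟩ := Finsupp.ne_iff.1 (hv j)
    have : ∃ i, 0 < v j i := ⟨i, Nat.pos_of_ne_zero hi⟩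
    simpa [φ, sum_pos_iff_of_nonneg] using this
  obtain ⟨l', hl', hindep, hcomb, hweight⟩ :=
    exists_linearIndepOn_support_of_nonneg φ hφ (fun _ => 1) hl
  refine ⟨l', hl', hindep, fun i => ?_, by simpa using hweight⟩
  simpa using congrFun hcomb i

lemma le_of_one_le_weight {ι : Type*} [Fintype ι] {v : ι → σ →₀ ℕ} {l : ι → ℚ} (hl : 0 ≤ l)
    (hle : ∀ i, ∑ j, l j * (v j i : ℚ) ≤ a i) {j : ι} (hj : 1 ≤ l j) : v j ≤ a := by
  intro i
  suffices (v j i : ℚ) ≤ a i by exact_mod_cast this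
  calc (v j i : ℚ) ≤ l j * v j i := le_mul_of_one_le_left (Nat.cast_nonneg _) hj
    _ ≤ ∑ j, l j * v j i := single_le_sum (f := fun j => l j * (v j i : ℚ))
        (fun j _ => mul_nonneg (hl j) (Nat.cast_nonneg _)) (mem_univ j)
    _ ≤ a i := hle i

lemma exists_le_sub_mem_newtonDilate [Finite σ] (h0 : 0 ∉ S) {r : ℕ}
    (hr : exponentRank S ≤ r + 1) (ha : a ∈ newtonDilate S (r + 1)) :
    ∃ s ∈ S, s ≤ a ∧ a - s ∈ newtonDilate S r := by
  obtain ⟨N, v, l₀, hv, hl₀, hsum₀, hle₀⟩ := ha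
  obtain ⟨l, hl, hindep, hcomb, hweight⟩ :=
    exists_linearIndepOn_weights (fun j => ne_of_mem_of_not_mem (hv j) h0) hl₀
  have hsum : (r + 1 : ℚ) ≤ ∑ j, l j := by exact_mod_cast hsum₀.trans hweight
  have hle (i) : ∑ j, l j * (v j i : ℚ) ≤ a i := (hcomb i).trans_le (hle₀ i)
  have hcard : ((Function.support l).ncard : ℚ) ≤ r + 1 :=
    mod_cast (ncard_le_exponentRank hv hindep).trans hr
  obtain ⟨j, hj⟩ := exists_one_le_of_ncard_support_le_sum
    (lt_of_lt_of_le (by positivity) hsum) (hcard.trans hsum)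
  have hja : v j ≤ a := le_of_one_le_weight hl hle hj
  refine ⟨v j, hv j, hja, N, v, l - Pi.single j 1, hv, fun k => ?_, ?_, fun i => ?_⟩
  · rcases eq_or_ne k j with rfl | hkj
    · simpa using hj
    · simpa [hkj] using hl k
  · simpa [le_sub_iff_add_le] using hsum
  · simpa [sub_mul, Pi.single_apply, Nat.cast_sub (hja i)] using hle i

lemma mem_newtonDilate_of_isIntegralOverIdeal [IsReduced R] {r : ℕ}
    (hf : IsIntegralOverIdeal (monomialIdeal R S ^ r) f) (ha : a ∈ f.support) :
    a ∈ newtonDilate S r := by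
  rw [monomialIdeal_pow] at hf
  obtain ⟨k, hk, s, hs, hsa⟩ := exists_nsmul_le_of_isIntegralOverIdeal_monomial
    (mem_support_iff.1 ha) (hf.monomial_coeff a)
  exact mem_newtonDilate_of_nsmul_le hk (by rwa [mul_nsmul]) hsa

lemma isIntegralOverIdeal_monomial_of_mem_newtonDilate {r : ℕ} (ha : a ∈ newtonDilate S r) :
    IsIntegralOverIdeal (monomialIdeal R S ^ r) (monomial a (1 : R)) := by
  obtain ⟨k, hk, hs⟩ := exists_nsmul_le_of_mem_newtonDilate ha
  refine .of_pow_mem hk ?_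
  rw [← pow_mul, monomial_pow, one_pow, mem_monomialIdeal_pow]
  intro b hb
  rwa [mem_singleton.1 (support_monomial_subset hb)]

lemma isIntegrallyClosedIdeal_monomialIdeal_pow_iff [IsReduced R] [Nontrivial R] {r : ℕ} :
    IsIntegrallyClosedIdeal (monomialIdeal R S ^ r) ↔
      ∀ a ∈ newtonDilate S r, ∃ s ∈ r • S, s ≤ a := by
  refine ⟨fun h a ha => ?_, fun h f hf => ?_⟩
  · have hmem := h _ (isIntegralOverIdeal_monomial_of_mem_newtonDilate (R := R) ha)
    exact mem_monomialIdeal_pow.1 hmem a (by classical simp [support_monomial])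
  · exact mem_monomialIdeal_pow.2 fun a ha => h a (mem_newtonDilate_of_isIntegralOverIdeal hf ha)

theorem stmt2_general [Finite σ] [IsReduced R] [Nontrivial R] (S : Set (σ →₀ ℕ))
    (h : ∀ m, 1 ≤ m → m < exponentRank S → IsIntegrallyClosedIdeal (monomialIdeal R S ^ m)) :
    IsNormalIdeal (monomialIdeal R S) := by
  simp only [IsNormalIdeal, isIntegrallyClosedIdeal_monomialIdeal_pow_iff] at h ⊢
  suffices hall : ∀ m, ∀ a ∈ newtonDilate S m, ∃ s ∈ m • S, s ≤ a from fun m _ => hall m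
  by_cases h0 : (0 : σ →₀ ℕ) ∈ S
  · exact fun m a _ => ⟨0, Set.zero_mem_nsmul h0, zero_le⟩
  intro m
  induction m with
  | zero => exact fun a _ => ⟨0, by simp, zero_le⟩
  | succ m ih =>
    rcases lt_or_ge (m + 1) (exponentRank S) with hm | hm
    · exact h _ m.succ_pos hm
    intro a ha
    obtain ⟨s, hs, hsa, has⟩ := exists_le_sub_mem_newtonDilate h0 hm ha
    obtain ⟨t, ht, hta⟩ := ih _ has
    exact ⟨t + s, succ_nsmul S m ▸ Set.add_mem_add ht hs, (le_tsub_iff_right hsa).1 hta⟩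

end MonomialIdeal

theorem stmt2 {K : Type*} [Field K] {n : ℕ} (I : Ideal (MvPolynomial (Fin n) K))
    (hmono : ∃ S : Set (Fin n →₀ ℕ),
      I = Ideal.span ((fun α => MvPolynomial.monomial α (1 : K)) '' S))
    (h : ∀ m : ℕ, 1 ≤ m → m ≤ n - 1 → IsIntegrallyClosedIdeal (I ^ m)) :
    IsNormalIdeal I := by
  obtain ⟨S, rfl⟩ := hmono
  have hrank : exponentRank S ≤ n := by simpa using exponentRank_le_card S
  exact stmt2_general S fun m h1 hm => h m h1 (by omega)
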